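/- arXiv:0711.4325 — 2 statements merged into one kernel-verified Lean document; each statement's English description precedes it below -/
import Mathlib

section
/- Fix k ≥ 2. Let X_n count the occurrences of the increasing pattern 12...k in a uniformly random n-permutation. There exists a positive constant c such that for all sufficiently large n, Var(X_n) ≥ c·n^{2k-1}. -/
/-- The number of occurrences of the increasing pattern `12⋯k` in `p`. -/
noncomputable def incCount (k : ℕ) {n : ℕ} (p : Equiv.Perm (Fin n)) : ℕ :=
  Nat.card {f : Fin k ↪o Fin n // StrictMono (⇑p ∘ ⇑f)}

/-- The expectation of `incCount k` over uniformly random `n`-permutations. -/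
noncomputable def EX (k n : ℕ) : ℝ :=
  (∑ p : Equiv.Perm (Fin n), (incCount k p : ℝ)) / n.factorial

/-- The variance of `incCount k` over uniformly random `n`-permutations. -/
noncomputable def VarX (k n : ℕ) : ℝ :=
  (∑ p : Equiv.Perm (Fin n), (incCount k p : ℝ) ^ 2) / n.factorial - (EX k n) ^ 2

/-!
Correlate the pattern count `X` with the linear statistic `Y p = ∑ i, a i * a (p i)`, where `a i` is
the centered rank of `i`. Since `X` is a sum of indicators of `p ∘ f = g` over increasing `f` and
`g`, and `Y` is a weighted sum of indicators of `p i = x`, the moments `E[X Y]` and `E[Y²]` both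
follow from the mean of `Y` over the permutations that extend a partial assignment.

This gives `E[Y] = 0` and `E[Y²] = (∑ i, a i ^ 2) ^ 2 / (n - 1) = O(n⁵)`, while `E[X Y]` is at least
`(n - k)! / n! ≥ n⁻ᵏ` times a sum over `m < k` of the squares `(∑ f, a (f m)) ^ 2`. The first and
last entries of `f` are on average at distance of order `n`, so two of the sums `∑ f, a (f m)`
differ by order `n ^ (k + 1)`, and `E[X Y]` has order at least `n ^ (k + 2)`. By Cauchy–Schwarz,
`Var X ≥ E[X Y]² / E[Y²]` has order at least `n ^ (2 k + 4 - 5)`.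
-/

open Finset
open Equiv (Perm)
open scoped Nat

section LinearPermStat

variable {α R : Type*} [Fintype α] [CommRing R]

/-- The linear permutation statistic `σ ↦ ∑ i, a i * b (σ i)`; for `a` and `b` the (centered)
ranks it is Spearman's rank correlation up to scaling. -/
def linearPermStat (a b : α → R) (σ : Perm α) : R :=
  ∑ i, a i * b (σ i)

lemma sum_linearPermStat_eq_sum_mul (s : Finset (Perm α)) (a b : α → R) :
    ∑ σ ∈ s, linearPermStat a b σ = ∑ i, a i * ∑ σ ∈ s, b (σ i) := by
  simp_rw [linearPermStat, mul_sum]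
  exact sum_comm

variable [DecidableEq α]

lemma sum_linearPermStat_mul (a b : α → R) (Z : Perm α → R) :
    ∑ σ, linearPermStat a b σ * Z σ = ∑ i, ∑ x, a i * b x * ∑ σ : Perm α with σ i = x, Z σ := by
  simp_rw [linearPermStat, sum_mul]
  rw [sum_comm]
  refine sum_congr rfl fun i _ ↦ ?_
  rw [← sum_fiberwise univ (fun σ : Perm α ↦ σ i)]
  refine sum_congr rfl fun x _ ↦ ?_
  rw [mul_sum]
  exact sum_congr rfl fun σ hσ ↦ by rw [(mem_filter.1 hσ).2]

end LinearPermStat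

section PermsMapping

variable {ι α R : Type*} [Fintype ι] [Fintype α] [DecidableEq α] [CommRing R]

/-- The permutations `σ` with `σ (f m) = g m` for all `m`, i.e. those extending the partial
assignment `f m ↦ g m`. -/
def permsMapping (f g : ι → α) : Finset (Perm α) :=
  {σ | ∀ m, σ (f m) = g m}

lemma mem_permsMapping {f g : ι → α} {σ : Perm α} :
    σ ∈ permsMapping f g ↔ ∀ m, σ (f m) = g m := by
  simp [permsMapping]

lemma card_permsMapping (f g : ι ↪ α) :
    #(permsMapping f g) = (Fintype.card α - Fintype.card ι)! := by
  classical
  let e : Set.range f ≃ Set.range g :=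
    (Equiv.ofInjective f f.injective).symm.trans (Equiv.ofInjective g g.injective)
  have he : ∀ σ : Perm α, (∀ m, σ (f m) = g m) ↔ ∀ x : Set.range f, σ x = e x := fun σ ↦ by
    rw [Set.forall_subtype_range_iff]
    simp [e]
  have hcompl : ∀ h : ι ↪ α, Fintype.card ↥(Set.range h)ᶜ = Fintype.card α - Fintype.card ι :=
    fun h ↦ by rw [Fintype.card_compl_set, Set.card_range_of_injective h.injective]
  have e' : ↥(Set.range f)ᶜ ≃ ↥(Set.range g)ᶜ :=
    Fintype.equivOfCardEq ((hcompl f).trans (hcompl g).symm)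
  rw [permsMapping, ← Fintype.card_subtype, ← hcompl f, ← Fintype.card_equiv e']
  exact Fintype.card_congr ((Equiv.subtypeEquivRight he).trans (Equiv.Set.compl e))

lemma sum_permsMapping_apply_apply (f g : ι ↪ α) (b : α → R) (m : ι) :
    ∑ σ ∈ permsMapping f g, b (σ (f m)) =
      (Fintype.card α - Fintype.card ι)! * b (g m) := by
  rw [← card_permsMapping f g, ← nsmul_eq_mul]
  exact sum_eq_card_nsmul fun σ hσ ↦ by rw [mem_permsMapping.1 hσ m]

lemma sum_permsMapping_apply_eq_of_notMem_range (f g : ι → α) (b : α → R) {i j : α}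
    (hi : i ∉ Set.range f) (hj : j ∉ Set.range f) :
    ∑ σ ∈ permsMapping f g, b (σ i) = ∑ σ ∈ permsMapping f g, b (σ j) := by
  refine sum_equiv (Equiv.mulRight (Equiv.swap i j)) (fun σ ↦ ?_) fun σ _ ↦ by simp
  have hswap : ∀ m, Equiv.swap i j (f m) = f m := fun m ↦
    Equiv.swap_apply_of_ne_of_ne (fun h ↦ hi ⟨m, h⟩) (fun h ↦ hj ⟨m, h⟩)
  simp [mem_permsMapping, hswap]

lemma sum_compl_map_eq_sub (f : ι ↪ α) (v : α → R) :
    ∑ i ∈ (univ.map f)ᶜ, v i = ∑ i, v i - ∑ m, v (f m) := by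
  rw [← sum_compl_add_sum (univ.map f) v, sum_map, add_sub_cancel_right]

variable {K : Type*} [Field K] [CharZero K]

lemma sum_permsMapping_apply_of_notMem_range (f g : ι ↪ α) (b : α → K) {i : α}
    (hi : i ∉ Set.range f) :
    ∑ σ ∈ permsMapping f g, b (σ i) = (Fintype.card α - Fintype.card ι)! *
      ((∑ j, b j - ∑ m, b (g m)) / (Fintype.card α - Fintype.card ι)) := by
  -- By symmetry the sum is the same for all positions outside the range of `f`, so its value can be
  -- read off from the total over all positions.
  have hcard : (#(univ.map f)ᶜ : K) = Fintype.card α - Fintype.card ι := by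
    simpa using sum_compl_map_eq_sub f (1 : α → K)
  have hcard_ne : (Fintype.card α - Fintype.card ι : K) ≠ 0 := by
    rw [← hcard, Nat.cast_ne_zero]
    exact card_ne_zero_of_mem (mem_compl.2 (by simpa using hi) : i ∈ (univ.map f)ᶜ)
  have htotal : ∑ j, ∑ σ ∈ permsMapping f g, b (σ j) =
      (Fintype.card α - Fintype.card ι)! * ∑ j, b j := by
    simp_rw [sum_comm (s := univ), Equiv.sum_comp, sum_const, card_permsMapping, nsmul_eq_mul]
  have hout : ∑ j ∈ (univ.map f)ᶜ, ∑ σ ∈ permsMapping f g, b (σ j) =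
      (Fintype.card α - Fintype.card ι) * ∑ σ ∈ permsMapping f g, b (σ i) := by
    rw [← hcard, ← nsmul_eq_mul]
    refine sum_eq_card_nsmul fun j hj ↦ sum_permsMapping_apply_eq_of_notMem_range f g b ?_ hi
    simpa using hj
  rw [← mul_div_assoc, eq_div_iff hcard_ne, mul_comm, ← hout, sum_compl_map_eq_sub, htotal]
  simp_rw [sum_permsMapping_apply_apply, ← mul_sum, mul_sub]

lemma sum_permsMapping_linearPermStat (f g : ι ↪ α) (a b : α → K) :
    ∑ σ ∈ permsMapping f g, linearPermStat a b σ = (Fintype.card α - Fintype.card ι)! *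
      (∑ m, a (f m) * b (g m) + (∑ i, a i - ∑ m, a (f m)) * (∑ i, b i - ∑ m, b (g m)) /
        (Fintype.card α - Fintype.card ι)) := by
  set w : K := ↑(Fintype.card α - Fintype.card ι)!
  set r : K := (∑ i, b i - ∑ m, b (g m)) / (Fintype.card α - Fintype.card ι) with hr
  have hout : ∀ i ∈ (univ.map f)ᶜ, ∑ σ ∈ permsMapping f g, b (σ i) = w * r := fun i hi ↦
    sum_permsMapping_apply_of_notMem_range f g b (by simpa using hi)
  calc ∑ σ ∈ permsMapping f g, linearPermStat a b σ
      = ∑ i, a i * ∑ σ ∈ permsMapping f g, b (σ i) := sum_linearPermStat_eq_sum_mul _ a b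
    _ = ∑ m, a (f m) * (w * b (g m)) + ∑ i ∈ (univ.map f)ᶜ, a i * (w * r) := by
      rw [← sum_add_sum_compl (univ.map f), sum_map]
      simp_rw [sum_permsMapping_apply_apply]
      exact congrArg _ (sum_congr rfl fun i hi ↦ by rw [hout i hi])
    _ = w * (∑ m, a (f m) * b (g m) + (∑ i, a i - ∑ m, a (f m)) * r) := by
      rw [← sum_mul, sum_compl_map_eq_sub]
      simp_rw [mul_left_comm _ w, ← mul_sum, mul_add]
    _ = _ := by rw [hr, mul_div_assoc]

lemma sum_linearPermStat (a b : α → K) :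
    ∑ σ, linearPermStat a b σ =
      (Fintype.card α)! * ((∑ i, a i) * (∑ i, b i) / Fintype.card α) := by
  let f : Empty ↪ α := .ofIsEmpty
  have huniv : permsMapping f f = univ := by ext; simp [mem_permsMapping]
  simpa [huniv] using sum_permsMapping_linearPermStat f f a b

lemma sum_linearPermStat_of_apply_eq (a b : α → K) (i x : α) :
    ∑ σ : Perm α with σ i = x, linearPermStat a b σ = (Fintype.card α - 1)! *
      (a i * b x + (∑ j, a j - a i) * (∑ j, b j - b x) / (Fintype.card α - 1)) := by
  have hperms : permsMapping (fun _ : Unit ↦ i) (fun _ ↦ x) =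
      ({σ | σ i = x} : Finset (Perm α)) := by
    ext; simp [mem_permsMapping]
  simpa [hperms, Function.Embedding.punit] using
    sum_permsMapping_linearPermStat (.punit i) (.punit x : Unit ↪ α) a b

lemma sum_linearPermStat_sq [Nontrivial α] {a b : α → K} (ha : ∑ i, a i = 0)
    (hb : ∑ i, b i = 0) :
    ∑ σ, linearPermStat a b σ ^ 2 =
      (Fintype.card α)! / (Fintype.card α - 1) * ((∑ i, a i ^ 2) * ∑ i, b i ^ 2) := by
  have hcard : (Fintype.card α - 1 : K) ≠ 0 :=
    sub_ne_zero.2 (Nat.cast_ne_one.2 Fintype.one_lt_card.ne')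
  have hfac : ((Fintype.card α)! : K) = Fintype.card α * (Fintype.card α - 1)! :=
    mod_cast (Nat.mul_factorial_pred Fintype.card_ne_zero).symm
  simp_rw [sq, sum_linearPermStat_mul, sum_linearPermStat_of_apply_eq, ha, hb, zero_sub,
    neg_mul_neg, hfac, sum_mul_sum, mul_sum]
  refine sum_congr rfl fun i _ ↦ sum_congr rfl fun x _ ↦ ?_
  field_simp
  ring

end PermsMapping

section CauchySchwarz

variable {Ω K : Type*} [Field K]

lemma sum_sub_mean_sq [CharZero K] (s : Finset Ω) (X : Ω → K) :
    ∑ ω ∈ s, (X ω - (∑ ω ∈ s, X ω) / #s) ^ 2 = ∑ ω ∈ s, X ω ^ 2 - (∑ ω ∈ s, X ω) ^ 2 / #s := by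
  obtain rfl | hs := s.eq_empty_or_nonempty
  · simp
  have hs0 : (#s : K) ≠ 0 := Nat.cast_ne_zero.2 hs.card_ne_zero
  simp_rw [sub_sq, sum_add_distrib, sum_sub_distrib, ← sum_mul, ← mul_sum, sum_const, nsmul_eq_mul]
  field_simp
  ring

variable [LinearOrder K] [IsStrictOrderedRing K]

lemma sq_sum_mul_le_of_sum_eq_zero (s : Finset Ω) (X : Ω → K) {Y : Ω → K}
    (hY : ∑ ω ∈ s, Y ω = 0) :
    (∑ ω ∈ s, X ω * Y ω) ^ 2 ≤
      (∑ ω ∈ s, X ω ^ 2 - (∑ ω ∈ s, X ω) ^ 2 / #s) * ∑ ω ∈ s, Y ω ^ 2 := by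
  have hcov : ∑ ω ∈ s, X ω * Y ω = ∑ ω ∈ s, (X ω - (∑ ω ∈ s, X ω) / #s) * Y ω := by
    simp_rw [sub_mul, sum_sub_distrib, ← mul_sum, hY, mul_zero, sub_zero]
  rw [hcov, ← sum_sub_mean_sq]
  exact sum_mul_sq_le_sq_mul_sq s _ _

end CauchySchwarz

lemma sub_sq_le_two_mul_sum_sq {ι R : Type*} [Fintype ι] [CommRing R] [LinearOrder R]
    [IsStrictOrderedRing R] (x : ι → R) {i j : ι} (hij : i ≠ j) :
    (x i - x j) ^ 2 ≤ 2 * ∑ m, x m ^ 2 := by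
  classical
  have hpair : x i ^ 2 + x j ^ 2 ≤ ∑ m, x m ^ 2 := by
    rw [← sum_pair (f := fun m ↦ x m ^ 2) hij]
    exact sum_le_univ_sum_of_nonneg fun m ↦ sq_nonneg (x m)
  linarith [sq_nonneg (x i + x j), sub_sq' (x i) (x j), add_sq' (x i) (x j)]

section OrderEmbedding

variable {α : Type*} [LinearOrder α] [Fintype α]

lemma card_fin_orderEmbedding (k : ℕ) [Fintype (Fin k ↪o α)] :
    Fintype.card (Fin k ↪o α) = (Fintype.card α).choose k := by
  rw [← Nat.card_eq_fintype_card, Nat.card_congr Set.powersetCard.ofFinEmbEquiv,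
    Set.powersetCard.card, Nat.card_eq_fintype_card]

lemma choose_le_sum_card_Ico [LocallyFiniteOrder α] (q : ℕ) [Fintype (Fin (q + 2) ↪o α)] :
    (Fintype.card α).choose (q + 3) ≤
      ∑ f : Fin (q + 2) ↪o α, #(Ico (f 0) (f (Fin.last _))) := by
  classical
  have : Fintype (Fin (q + 3) ↪o α) := .ofInjective _ DFunLike.coe_injective
  rw [← card_fin_orderEmbedding, ← card_sigma, ← card_univ]
  -- Remove the second of `q + 3` points; it lies between the first and the last remaining one.
  refine card_le_card_of_injOn (fun e ↦ ⟨(Fin.succAboveOrderEmb 1).trans e, e 1⟩)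
    (fun e _ ↦ ?_) fun e _ e' _ h ↦ ?_
  · have hlast : (1 : Fin (q + 3)) < Fin.succAbove 1 (Fin.last (q + 1)) := by
      rw [Fin.succAbove_ne_last_last] <;> simp [Fin.ext_iff, Fin.lt_def]
    simp [hlast]
  · simp only [Sigma.mk.injEq, heq_eq_eq] at h
    ext i
    induction i using Fin.succAboveCases (1 : Fin (q + 3)) with
    | x => exact h.2
    | p i => exact DFunLike.congr_fun h.1 i

end OrderEmbedding

lemma pow_div_le_choose {r n : ℕ} (h : 2 * r ≤ n) :
    (n : ℝ) ^ r / (2 ^ r * r !) ≤ n.choose r := by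
  refine le_trans ?_ (Nat.pow_le_choose r n)
  rw [← div_div, ← div_pow]
  gcongr
  rw [div_le_iff₀ two_pos]
  norm_cast
  lia

section CenteredRank

variable {n : ℕ}

/-- The centered rank `2 * i - (n - 1)` of `i : Fin n`, which serves as the weight of the linear
statistic. It is written as the difference of `i` and its mirror image so that the sum over `Fin n`
visibly vanishes. -/
def centeredRank (i : Fin n) : ℝ :=
  (i : ℝ) - i.rev

lemma sum_centeredRank : ∑ i : Fin n, centeredRank i = 0 := by
  simp_rw [centeredRank, sum_sub_distrib]
  exact sub_eq_zero.2 (Equiv.sum_comp Fin.revPerm fun i : Fin n ↦ (i : ℝ)).symm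

lemma centeredRank_sub_centeredRank (i j : Fin n) :
    centeredRank i - centeredRank j = 2 * ((i : ℝ) - j) := by
  have hrev : ∀ i : Fin n, (i.rev : ℝ) = n - 1 - i := fun i ↦ by
    rw [Fin.val_rev, Nat.cast_sub i.2]; push_cast; ring
  rw [centeredRank, centeredRank, hrev, hrev]
  ring

lemma abs_centeredRank_le (i : Fin n) : |centeredRank i| ≤ n :=
  abs_sub_le_of_nonneg_of_le (Nat.cast_nonneg _) (by exact_mod_cast i.2.le)
    (Nat.cast_nonneg _) (by exact_mod_cast i.rev.2.le)

lemma sum_centeredRank_sq_le : ∑ i : Fin n, centeredRank i ^ 2 ≤ n ^ 3 := by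
  calc ∑ i : Fin n, centeredRank i ^ 2 ≤ ∑ _i : Fin n, (n : ℝ) ^ 2 :=
        sum_le_sum fun i _ ↦ sq_le_sq.2 ((abs_centeredRank_le i).trans (le_abs_self _))
    _ = n ^ 3 := by simp; ring

lemma pow_le_sum_centeredRank_sub {q : ℕ} (hn : 2 * (q + 3) ≤ n) :
    2 * ((n : ℝ) ^ (q + 3) / (2 ^ (q + 3) * (q + 3)!)) ≤
      ∑ f : Fin (q + 2) ↪o Fin n, centeredRank (f (Fin.last _)) -
        ∑ f : Fin (q + 2) ↪o Fin n, centeredRank (f 0) := by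
  have hcard : ∀ f : Fin (q + 2) ↪o Fin n,
      (#(Ico (f 0) (f (Fin.last _))) : ℝ) = (f (Fin.last _) : ℝ) - f 0 := fun f ↦ by
    rw [Fin.card_Ico, Nat.cast_sub (f.monotone (Fin.zero_le _))]
  have hspread : (n.choose (q + 3) : ℝ) ≤
      ∑ f : Fin (q + 2) ↪o Fin n, ((f (Fin.last _) : ℝ) - f 0) := by
    simp_rw [← hcard]
    exact_mod_cast Fintype.card_fin n ▸ choose_le_sum_card_Ico (α := Fin n) q
  simp_rw [← sum_sub_distrib, centeredRank_sub_centeredRank, ← mul_sum]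
  gcongr
  exact (pow_div_le_choose hn).trans hspread

end CenteredRank

section IncCount

variable {k n : ℕ}

lemma incCount_eq_card (p : Perm (Fin n)) :
    incCount k p =
      #{x : (Fin k ↪o Fin n) × (Fin k ↪o Fin n) | p ∈ permsMapping x.1 x.2} := by
  rw [incCount, ← Fintype.card_subtype, ← Nat.card_eq_fintype_card]
  exact Nat.card_congr
    { toFun f := ⟨(f, .ofStrictMono _ f.2), mem_permsMapping.2 fun _ ↦ rfl⟩
      invFun x := ⟨x.1.1, fun i j hij ↦ by
        simpa [mem_permsMapping.1 x.2] using hij⟩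
      left_inv f := rfl
      right_inv x := Subtype.ext <| Prod.ext rfl <| DFunLike.ext _ _ <| mem_permsMapping.1 x.2 }

lemma sum_incCount_mul {R : Type*} [Semiring R] (Z : Perm (Fin n) → R) :
    ∑ p, incCount k p * Z p =
      ∑ f : Fin k ↪o Fin n, ∑ g : Fin k ↪o Fin n, ∑ p ∈ permsMapping f g, Z p := by
  simp_rw [incCount_eq_card, ← nsmul_eq_mul, ← sum_const, ← Fintype.sum_prod_type']
  exact sum_comm' (by simp)

lemma sum_incCount_mul_linearPermStat {K : Type*} [Field K] [CharZero K] {a b : Fin n → K}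
    (ha : ∑ i, a i = 0) (hb : ∑ i, b i = 0) :
    ∑ p, incCount k p * linearPermStat a b p = (n - k)! *
      (∑ m, (∑ f : Fin k ↪o Fin n, a (f m)) * (∑ f : Fin k ↪o Fin n, b (f m)) +
        (∑ f : Fin k ↪o Fin n, ∑ m, a (f m)) * (∑ f : Fin k ↪o Fin n, ∑ m, b (f m)) / (n - k)) := by
  have hfiber : ∀ f g : Fin k ↪o Fin n, ∑ p ∈ permsMapping f g, linearPermStat a b p =
      (n - k)! * (∑ m, a (f m) * b (g m) + (∑ m, a (f m)) * (∑ m, b (g m)) / (n - k)) :=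
    fun f g ↦ by
      simpa [ha, hb] using sum_permsMapping_linearPermStat f.toEmbedding g.toEmbedding a b
  simp_rw [sum_incCount_mul, hfiber, ← mul_sum, sum_add_distrib, ← sum_div, sum_mul_sum]
  congr 2
  exact sum_comm_cycle

lemma factorial_mul_sum_sq_le_sum_incCount_mul (hkn : k ≤ n) {a : Fin n → ℝ}
    (ha : ∑ i, a i = 0) :
    (n - k)! * ∑ m, (∑ f : Fin k ↪o Fin n, a (f m)) ^ 2 ≤
      ∑ p, incCount k p * linearPermStat a a p := by
  have hkn' : (0 : ℝ) ≤ n - k := sub_nonneg.2 (Nat.cast_le.2 hkn)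
  simp_rw [sum_incCount_mul_linearPermStat ha ha, ← sq]
  gcongr
  exact le_add_of_nonneg_right (by positivity)

lemma factorial_mul_VarX (k n : ℕ) :
    n ! * VarX k n = ∑ p : Perm (Fin n), (incCount k p : ℝ) ^ 2 -
      (∑ p : Perm (Fin n), (incCount k p : ℝ)) ^ 2 / #(univ : Finset (Perm (Fin n))) := by
  rw [VarX, EX, card_univ, Fintype.card_perm, Fintype.card_fin]
  field_simp

lemma VarX_nonneg (k n : ℕ) : 0 ≤ VarX k n := by
  have hfac : (0 : ℝ) < n ! := mod_cast n.factorial_pos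
  refine nonneg_of_mul_nonneg_right ?_ hfac
  rw [factorial_mul_VarX, ← sum_sub_mean_sq]
  exact sum_nonneg fun p _ ↦ sq_nonneg _

lemma sq_sum_incCount_mul_le (k : ℕ) {Y : Perm (Fin n) → ℝ} (hY : ∑ p, Y p = 0) :
    (∑ p, incCount k p * Y p) ^ 2 ≤ n ! * VarX k n * ∑ p, Y p ^ 2 := by
  rw [factorial_mul_VarX]
  exact sq_sum_mul_le_of_sum_eq_zero univ _ hY

lemma factorial_le_pow_mul_factorial_sub (hkn : k ≤ n) : n ! ≤ n ^ k * (n - k)! := by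
  rw [← Nat.factorial_mul_descFactorial hkn, mul_comm]
  exact Nat.mul_le_mul_right _ (n.descFactorial_le_pow k)

lemma sub_one_mul_sq_le_mul_VarX (hkn : k ≤ n) (hn : 2 ≤ n) {a : Fin n → ℝ}
    (ha : ∑ i, a i = 0) :
    (n - 1) * (∑ m, (∑ f : Fin k ↪o Fin n, a (f m)) ^ 2) ^ 2 ≤
      (n ^ k) ^ 2 * (∑ i, a i ^ 2) ^ 2 * VarX k n := by
  have : Nontrivial (Fin n) := Fin.nontrivial_iff_two_le.2 hn
  have hn1 : (0 : ℝ) < n - 1 := sub_pos.2 (Nat.one_lt_cast.2 hn)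
  have hfac : (n ! : ℝ) ≤ n ^ k * (n - k)! := mod_cast factorial_le_pow_mul_factorial_sub hkn
  set S := ∑ m, (∑ f : Fin k ↪o Fin n, a (f m)) ^ 2
  have hS : 0 ≤ S := sum_nonneg fun m _ ↦ sq_nonneg _
  have hmean : ∑ p, linearPermStat a a p = 0 := by simp [sum_linearPermStat, ha]
  have hCS : ((n - k)! * S) ^ 2 ≤
      n ! * VarX k n * (n ! / (n - 1) * (∑ i, a i ^ 2) ^ 2) := calc
    ((n - k)! * S) ^ 2 ≤ (∑ p, incCount k p * linearPermStat a a p) ^ 2 := by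
      have hcov := factorial_mul_sum_sq_le_sum_incCount_mul hkn ha
      exact pow_le_pow_left₀ (mul_nonneg (Nat.cast_nonneg _) hS) hcov 2
    _ ≤ n ! * VarX k n * ∑ p, linearPermStat a a p ^ 2 := sq_sum_incCount_mul_le k hmean
    _ = _ := by rw [sum_linearPermStat_sq ha ha, Fintype.card_fin, sq (∑ i, a i ^ 2)]
  have hF : (0 : ℝ) < (n !) ^ 2 := by positivity
  refine le_of_mul_le_mul_left ?_ hF
  calc (n ! : ℝ) ^ 2 * ((n - 1) * S ^ 2)
      ≤ (n ^ k * (n - k)!) ^ 2 * ((n - 1) * S ^ 2) := by gcongr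
    _ = (n ^ k) ^ 2 * (n - 1) * ((n - k)! * S) ^ 2 := by ring
    _ ≤ (n ^ k) ^ 2 * (n - 1) * (n ! * VarX k n * (n ! / (n - 1) * (∑ i, a i ^ 2) ^ 2)) := by
      gcongr
    _ = _ := by field_simp

end IncCount

/-- The variance of the number of occurrences of `12⋯k` grows at least like
`n^(2k-1)`. -/
theorem variance_inc_count_lower_bound (k : ℕ) (hk : 2 ≤ k) :
    ∃ c : ℝ, 0 < c ∧ ∃ N : ℕ, ∀ n : ℕ, N ≤ n →
      c * (n : ℝ) ^ (2 * k - 1) ≤ VarX k n := by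
  obtain ⟨q, rfl⟩ := Nat.exists_eq_add_of_le' hk
  set C : ℝ := 2 ^ (q + 3) * (q + 3)!
  refine ⟨2 / C ^ 4, by positivity, 2 * (q + 3), fun n hn ↦ ?_⟩
  have hn2 : (2 : ℝ) ≤ n := mod_cast (by lia : 2 ≤ n)
  set S := ∑ m, (∑ f : Fin (q + 2) ↪o Fin n, centeredRank (f m)) ^ 2
  have hS : 2 * (n ^ (q + 3) / C) ^ 2 ≤ S := by
    have hspread := pow_le_pow_left₀ (by positivity) (pow_le_sum_centeredRank_sub hn) 2
    have hpair := sub_sq_le_two_mul_sum_sq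
      (fun m ↦ ∑ f : Fin (q + 2) ↪o Fin n, centeredRank (f m)) (Fin.last_pos (n := q)).ne'
    linarith
  have hVar : (n - 1) * S ^ 2 ≤ (n ^ (q + 2)) ^ 2 * (n ^ 3) ^ 2 * VarX (q + 2) n := by
    refine (sub_one_mul_sq_le_mul_VarX (by lia) (by lia) sum_centeredRank).trans ?_
    gcongr
    exacts [VarX_nonneg _ _, sum_centeredRank_sq_le]
  refine le_of_mul_le_mul_left ?_ (by positivity : (0 : ℝ) < (n ^ (q + 2)) ^ 2 * (n ^ 3) ^ 2)
  calc ((n : ℝ) ^ (q + 2)) ^ 2 * (n ^ 3) ^ 2 * (2 / C ^ 4 * n ^ (2 * (q + 2) - 1))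
      = n / 2 * (2 * (n ^ (q + 3) / C) ^ 2) ^ 2 := by
        rw [show 2 * (q + 2) - 1 = 2 * q + 3 by lia]; field_simp; ring
    _ ≤ (n - 1) * S ^ 2 := by gcongr <;> linarith
    _ ≤ _ := hVar
end

section
/- Let I_1 and I_2 be two k-element index sets intersecting in exactly one position, where the common entry x is the a-th entry of I_1 and the b-th entry of I_2 (counting from the left, with the positions of I_1 preceding appropriately as in two overlapping subwords). Then the probability that both subsequences indexed by I_1 and I_2 are increasing in a uniformly random permutation equals binomial(a+b-2, a-1)·binomial(2k-a-b, k-a)/(2k-1)!. -/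
/-!
Rearranging the values of a random permutation within a block `s` of positions makes each of the
`|s|!` orders of these values equally likely, so an event invariant under such rearrangements is
`|s|!` times as likely as its intersection with the event that `p` is increasing on `s`.

Let `F ∩ G = {x}` and consider the event that every position of `F ∪ G` before (after) `x` carries
a smaller (larger) value than `x`. It is invariant under rearrangements within the part of `F ∪ G`
before `x` and within the part after `x`; sorting both makes `p` increasing on `F ∪ G`, which has
probability `1 / |F ∪ G|!`. It is also invariant under rearrangements within the four parts of `F`
and `G` before and after `x`; sorting these makes `p` increasing on `F` and on `G`. Comparing the
two counts, the factorials of the block sizes combine into the two binomial coefficients.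
-/

open Equiv Finset
open scoped Nat

theorem existsUnique_perm_strictMono_comp {ι β : Type*} [LinearOrder ι] [Finite ι] [LinearOrder β]
    {f : ι → β} (hf : f.Injective) : ∃! σ : Perm ι, StrictMono (f ∘ σ) := by
  have := Fintype.ofFinite ι
  let e : ι ≃ Set.range f := ofInjective f hf
  have := Fintype.ofEquiv ι e
  let o : ι ≃o Set.range f := (Fintype.orderIsoFinOfCardEq ι (Fintype.card_congr e)).symm.trans
    (Fintype.orderIsoFinOfCardEq (Set.range f) rfl)
  refine ⟨o.toEquiv.trans e.symm, fun i j hij => ?_, fun σ hσ => ?_⟩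
  · simpa [e, apply_ofInjective_symm] using hij
  · have hmono : StrictMono (σ.trans e) := hσ
    have ho : hmono.orderIsoOfSurjective _ (σ.trans e).surjective = o := Subsingleton.elim _ _
    ext i
    simp [← ho]

section Blocks

variable {α : Type*} [DecidableEq α] {s t : Finset α}

/-- The event `Q` is invariant under rearranging the values of a permutation within the block `s` of
positions. A rearrangement is encoded as a permutation of the subtype `s`, which acts on positions
and hence from the right. -/
def RearrangementInvariant (Q : Perm α → Prop) (s : Finset α) : Prop :=
  ∀ (p : Perm α) (σ : Perm s), Q p → Q (p * Perm.ofSubtype σ)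

theorem RearrangementInvariant.and {Q R : Perm α → Prop} (hQ : RearrangementInvariant Q s)
    (hR : RearrangementInvariant R s) : RearrangementInvariant (fun p => Q p ∧ R p) s :=
  fun p σ h => ⟨hQ p σ h.1, hR p σ h.2⟩

theorem mapsTo_ofSubtype (h : s ⊆ t ∨ Disjoint s t) (σ : Perm s) :
    Set.MapsTo (Perm.ofSubtype σ) t t := by
  intro y hy
  by_cases hys : y ∈ s
  · have hst : s ⊆ t := h.resolve_right fun hd => disjoint_left.1 hd hys hy
    exact hst ((Perm.ofSubtype_apply_mem_iff_mem σ y).2 hys)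
  · rwa [Perm.ofSubtype_apply_of_not_mem σ hys]

theorem rearrangementInvariant_mapsTo {x : α} (hx : x ∉ s) (h : s ⊆ t ∨ Disjoint s t)
    (u : α → Set α) : RearrangementInvariant (fun p => Set.MapsTo p t (u (p x))) s := by
  intro p σ hp
  simpa [Perm.ofSubtype_apply_of_not_mem σ hx] using hp.comp (mapsTo_ofSubtype h σ)

theorem rearrangementInvariant_strictMonoOn [Preorder α] (h : Disjoint s t) :
    RearrangementInvariant (fun p => StrictMonoOn p t) s := fun p σ hp =>
  hp.congr fun y hy => by
    simp [Perm.ofSubtype_apply_of_not_mem σ (disjoint_right.1 h hy)]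

theorem strictMonoOn_mul_ofSubtype_iff [Preorder α] {p : Perm α} {σ : Perm s} :
    StrictMonoOn (p * Perm.ofSubtype σ : Perm α) s ↔ StrictMono ((fun y : s => p y) ∘ σ) := by
  simp [Set.strictMonoOn_iff_strictMono, Function.comp_def]

end Blocks

section Sorting

variable {α : Type*} [LinearOrder α]

theorem card_eq_factorial_mul_card_strictMonoOn {Q : Perm α → Prop} {s : Finset α}
    (hQ : RearrangementInvariant Q s) :
    Nat.card {p // Q p} = (#s)! * Nat.card {p : Perm α // Q p ∧ StrictMonoOn p s} := by
  have hs : Nat.card (Perm s) = (#s)! := by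
    rw [Nat.card_perm, Nat.card_eq_fintype_card, Fintype.card_coe]
  rw [← hs, ← Nat.card_prod, eq_comm]
  refine Nat.card_eq_of_bijective (fun z => ⟨z.2.1 * Perm.ofSubtype z.1⁻¹, hQ _ _ z.2.2.1⟩) ?_
  refine (Function.bijective_iff_existsUnique _).2 fun ⟨p, hp⟩ => ?_
  obtain ⟨σ, hσ, hunique⟩ :=
    existsUnique_perm_strictMono_comp (p.injective.comp (Subtype.val_injective (p := (· ∈ s))))
  refine ⟨(σ, ⟨p * Perm.ofSubtype σ, hQ p σ hp, strictMonoOn_mul_ofSubtype_iff.2 hσ⟩), by simp, ?_⟩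
  rintro ⟨τ, q, _, hq⟩ h
  obtain rfl : q * Perm.ofSubtype τ⁻¹ = p := congrArg Subtype.val h
  obtain rfl : τ = σ := hunique τ (strictMonoOn_mul_ofSubtype_iff.1 (by simpa using hq))
  simp

theorem factorial_mul_card_strictMonoOn [Finite α] (S : Finset α) :
    (#S)! * Nat.card {p : Perm α // StrictMonoOn p S} = (Nat.card α)! := by
  have h := card_eq_factorial_mul_card_strictMonoOn (Q := fun _ => True) (s := S)
    fun _ _ _ => trivial
  simp only [true_and] at h
  rw [← h, Nat.card_congr (subtypeUnivEquiv fun _ => trivial), Nat.card_perm]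

end Sorting

section Sides

variable {α : Type*} [LinearOrder α] {β : Type*} [Preorder β] {F G S s : Finset α} {x : α}

/-- The values of `p` on `S` lie on the same side of `p x` as their positions do of `x`. This
is what remains of `p` being increasing on `S` once the order within each side is forgotten. -/
def PreservesSides (S : Finset α) (x : α) (p : α → β) : Prop :=
  Set.MapsTo p (S.filter (· < x)) (Set.Iio (p x)) ∧
    Set.MapsTo p (S.filter (x < ·)) (Set.Ioi (p x))

theorem preservesSides_union_iff {p : α → β} :
    PreservesSides (F ∪ G) x p ↔ PreservesSides F x p ∧ PreservesSides G x p := by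
  simp only [PreservesSides, filter_union, coe_union, Set.mapsTo_union, and_and_and_comm]

theorem strictMonoOn_iff_preservesSides (hx : x ∈ S) {p : α → β} :
    StrictMonoOn p S ↔ PreservesSides S x p ∧ StrictMonoOn p (S.filter (· < x)) ∧
      StrictMonoOn p (S.filter (x < ·)) := by
  refine ⟨fun h => ⟨⟨?_, ?_⟩, ?_, ?_⟩, ?_⟩
  · exact fun y hy => h (mem_filter.1 hy).1 hx (mem_filter.1 hy).2
  · exact fun y hy => h hx (mem_filter.1 hy).1 (mem_filter.1 hy).2
  · exact h.mono (coe_subset.2 (filter_subset _ _))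
  · exact h.mono (coe_subset.2 (filter_subset _ _))
  · rintro ⟨⟨hlt, hgt⟩, hl, hr⟩ y hy z hz hyz
    have below : ∀ {w}, w ∈ S → w < x → p w < p x := fun hw h => hlt (mem_filter.2 ⟨hw, h⟩)
    have above : ∀ {w}, w ∈ S → x < w → p x < p w := fun hw h => hgt (mem_filter.2 ⟨hw, h⟩)
    rcases lt_trichotomy y x with hyx | rfl | hxy
    · rcases lt_trichotomy z x with hzx | rfl | hxz
      · exact hl (mem_filter.2 ⟨hy, hyx⟩) (mem_filter.2 ⟨hz, hzx⟩) hyz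
      · exact below hy hyx
      · exact (below hy hyx).trans (above hz hxz)
    · exact above hz hyz
    · exact hr (mem_filter.2 ⟨hy, hxy⟩) (mem_filter.2 ⟨hz, hxy.trans hyz⟩) hyz

theorem disjoint_filter_lt_filter_gt : Disjoint (S.filter (· < x)) (S.filter (x < ·)) :=
  disjoint_filter.2 fun _ _ => not_lt_of_gt

theorem rearrangementInvariant_preservesSides (hx : x ∉ s)
    (hlt : s ⊆ S.filter (· < x) ∨ Disjoint s (S.filter (· < x)))
    (hgt : s ⊆ S.filter (x < ·) ∨ Disjoint s (S.filter (x < ·))) :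
    RearrangementInvariant (fun p => PreservesSides S x p) s :=
  (rearrangementInvariant_mapsTo hx hlt Set.Iio).and (rearrangementInvariant_mapsTo hx hgt Set.Ioi)

theorem rearrangementInvariant_preservesSides_of_disjoint (hx : x ∉ s) (h : Disjoint s S) :
    RearrangementInvariant (fun p => PreservesSides S x p) s :=
  rearrangementInvariant_preservesSides hx (.inr (h.mono_right (filter_subset _ _)))
    (.inr (h.mono_right (filter_subset _ _)))

theorem card_and_preservesSides (hx : x ∈ S) {Q : Perm α → Prop}
    (hlt : RearrangementInvariant Q (S.filter (· < x)))
    (hgt : RearrangementInvariant Q (S.filter (x < ·))) :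
    Nat.card {p : Perm α // Q p ∧ PreservesSides S x p} =
      (#(S.filter (· < x)))! * (#(S.filter (x < ·)))! *
        Nat.card {p : Perm α // Q p ∧ StrictMonoOn p S} := by
  have hsides_lt : RearrangementInvariant (fun p => PreservesSides S x p) (S.filter (· < x)) :=
    rearrangementInvariant_preservesSides (by simp) (.inl subset_rfl)
      (.inr disjoint_filter_lt_filter_gt)
  have hsides_gt : RearrangementInvariant (fun p => PreservesSides S x p) (S.filter (x < ·)) :=
    rearrangementInvariant_preservesSides (by simp) (.inr disjoint_filter_lt_filter_gt.symm)
      (.inl subset_rfl)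
  rw [card_eq_factorial_mul_card_strictMonoOn (hlt.and hsides_lt),
    card_eq_factorial_mul_card_strictMonoOn ((hgt.and hsides_gt).and
      (rearrangementInvariant_strictMonoOn disjoint_filter_lt_filter_gt.symm))]
  simp only [strictMonoOn_iff_preservesSides hx, and_assoc, mul_assoc]

theorem card_preservesSides (hx : x ∈ S) :
    Nat.card {p : Perm α // PreservesSides S x p} =
      (#(S.filter (· < x)))! * (#(S.filter (x < ·)))! *
        Nat.card {p : Perm α // StrictMonoOn p S} := by
  simpa using card_and_preservesSides hx (Q := fun _ => True) (fun _ _ _ => trivial)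
    fun _ _ _ => trivial

end Sides

section Overlap

section Cards

variable {α : Type*} [DecidableEq α] {F G : Finset α} {x : α} {r : α → Prop} [DecidablePred r]

theorem disjoint_filter_of_inter_eq_singleton (h : F ∩ G = {x}) (hr : ¬ r x) :
    Disjoint (F.filter r) G := by
  rw [disjoint_iff_inter_eq_empty, filter_inter, h, filter_singleton, if_neg hr]

theorem card_filter_union_of_inter_eq_singleton (h : F ∩ G = {x}) (hr : ¬ r x) :
    #((F ∪ G).filter r) = #(F.filter r) + #(G.filter r) := by
  rw [filter_union, card_union_of_disjoint]
  exact (disjoint_filter_of_inter_eq_singleton h hr).mono_right (filter_subset _ _)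

end Cards

variable {α : Type*} [LinearOrder α] {F G : Finset α} {x : α}

theorem card_preservesSides_union (h : F ∩ G = {x}) :
    Nat.card {p : Perm α // PreservesSides (F ∪ G) x p} =
      (#(F.filter (· < x)))! * (#(F.filter (x < ·)))! *
        ((#(G.filter (· < x)))! * (#(G.filter (x < ·)))! *
          Nat.card {p : Perm α // StrictMonoOn p F ∧ StrictMonoOn p G}) := by
  obtain ⟨hxF, hxG⟩ : x ∈ F ∧ x ∈ G := by simp [← mem_inter, h]
  have hFG {r : α → Prop} [DecidablePred r] (hr : ¬ r x) : Disjoint (F.filter r) G :=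
    disjoint_filter_of_inter_eq_singleton h hr
  have hGF {r : α → Prop} [DecidablePred r] (hr : ¬ r x) : Disjoint (G.filter r) F :=
    disjoint_filter_of_inter_eq_singleton (inter_comm F G ▸ h) hr
  rw [← card_and_preservesSides hxG
      (rearrangementInvariant_strictMonoOn (hGF (lt_irrefl x)))
      (rearrangementInvariant_strictMonoOn (hGF (lt_irrefl x)))]
  simp only [preservesSides_union_iff, and_comm (b := PreservesSides G x _)]
  exact card_and_preservesSides hxF
    (rearrangementInvariant_preservesSides_of_disjoint (by simp) (hFG (lt_irrefl x)))
    (rearrangementInvariant_preservesSides_of_disjoint (by simp) (hFG (lt_irrefl x)))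

theorem card_strictMonoOn_and_strictMonoOn (h : F ∩ G = {x}) :
    Nat.card {p : Perm α // StrictMonoOn p F ∧ StrictMonoOn p G} =
      (#(F.filter (· < x)) + #(G.filter (· < x))).choose #(F.filter (· < x)) *
        (#(F.filter (x < ·)) + #(G.filter (x < ·))).choose #(F.filter (x < ·)) *
          Nat.card {p : Perm α // StrictMonoOn p (F ∪ G : Finset α)} := by
  have hx : x ∈ F ∪ G := mem_union_left _ (mem_of_mem_inter_left (h ▸ mem_singleton_self x))
  have hcount := (card_preservesSides_union h).symm.trans (card_preservesSides hx)
  rw [card_filter_union_of_inter_eq_singleton h (r := (· < x)) (lt_irrefl x),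
    card_filter_union_of_inter_eq_singleton h (r := (x < ·)) (lt_irrefl x),
    ← Nat.add_choose_mul_factorial_mul_factorial, ← Nat.add_choose_mul_factorial_mul_factorial,
    ← Nat.choose_symm_add, ← Nat.choose_symm_add] at hcount
  have hpos : 0 < (#(F.filter (· < x)))! * (#(G.filter (· < x)))! *
      ((#(F.filter (x < ·)))! * (#(G.filter (x < ·)))!) := by positivity
  exact Nat.eq_of_mul_eq_mul_left hpos (by linarith)

end Overlap

section OrderEmbedding

variable {α β : Type*} [LinearOrder α] [Preorder β] {k : ℕ} (f : Fin k ↪o α) (a : Fin k)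

theorem strictMonoOn_map_iff_strictMono_comp {p : α → β} :
    StrictMonoOn p (univ.map f.toEmbedding : Finset α) ↔ StrictMono (p ∘ f) := by
  simp [StrictMonoOn, StrictMono]

theorem card_filter_map_lt : #((univ.map f.toEmbedding).filter (· < f a)) = a := by
  simp [filter_map, filter_gt_eq_Iio]

theorem card_filter_map_gt : #((univ.map f.toEmbedding).filter (f a < ·)) = k - 1 - a := by
  simp [filter_map, filter_lt_eq_Ioi]

end OrderEmbedding

theorem prob_two_overlapping_increasing_general {α : Type*} [LinearOrder α] [Finite α] {k l : ℕ}
    (f : Fin k ↪o α) (g : Fin l ↪o α) (a : Fin k) (b : Fin l) (hfg : f a = g b)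
    (hint : Set.range f ∩ Set.range g = {f a}) :
    (Nat.card {p : Perm α // StrictMono (p ∘ f) ∧ StrictMono (p ∘ g)} : ℝ) / (Nat.card α)! =
      ((a + b : ℕ).choose a * (k + l - 2 - a - b).choose (k - 1 - a) : ℝ) / (k + l - 1)! := by
  set F : Finset α := univ.map f.toEmbedding with hF
  set G : Finset α := univ.map g.toEmbedding with hG
  have hinter : F ∩ G = {f a} := by simpa [F, G, ← coe_inj] using hint
  have hunion : #(F ∪ G) = k + l - 1 := by
    rw [card_union, hinter]
    simp [F, G]
  have hright : k + l - 2 - a - b = (k - 1 - a) + (l - 1 - b) := by omega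
  have hcount := card_strictMonoOn_and_strictMonoOn hinter
  rw [card_filter_map_lt, card_filter_map_gt, hfg, card_filter_map_lt, card_filter_map_gt,
    ← hright] at hcount
  have htotal := factorial_mul_card_strictMonoOn (F ∪ G)
  rw [hunion] at htotal
  simp only [← strictMonoOn_map_iff_strictMono_comp, ← hF, ← hG]
  rw [div_eq_div_iff (by positivity) (by positivity), hcount, ← htotal]
  simp only [Nat.cast_mul]
  ring

/-- The probability that two increasing subsequences of length `k`, whose index
sets intersect in exactly one position (the `(a+1)`-st of the first and the
`(b+1)`-st of the second, zero-indexed), both occur in a uniformly random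
permutation is `C(a+b, a) · C(2k-2-a-b, k-1-a) / (2k-1)!`. -/
theorem prob_two_overlapping_increasing (k n : ℕ) (hk : 2 ≤ k)
    (f g : Fin k ↪o Fin n) (a b : Fin k) (hfg : f a = g b)
    (hint : Set.range (⇑f) ∩ Set.range (⇑g) = {f a}) :
    (Nat.card {p : Equiv.Perm (Fin n) //
        StrictMono (⇑p ∘ ⇑f) ∧ StrictMono (⇑p ∘ ⇑g)} : ℝ) / n.factorial =
      ((Nat.choose ((a : ℕ) + (b : ℕ)) a *
        Nat.choose (2 * k - 2 - (a : ℕ) - (b : ℕ)) (k - 1 - (a : ℕ))) : ℝ) /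
        (2 * k - 1).factorial := by
  simpa [two_mul] using prob_two_overlapping_increasing_general f g a b hfg hint
end
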